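/- Let k, l, k', l' ∈ ℕ₀ with l ≤ k and l' ≤ k', and let α, β ∈ ℝ with α > β > −1/2, α ≠ 0 and β ≠ 0. Then the parabolic biangle polynomials satisfy the orthogonality relation ∫₀¹ ∫₀^π 𝒫_{k,l}^{(α,β)}(w,φ) 𝒫_{k',l'}^{(α,β)}(w,φ) dm^{(α,β)}(w,φ) = (π Γ(β+1+k) Γ(2β+k−l) Γ(α−β+l)/(2^{2β} Γ(β)² (α+k+l)(β+k−l) Γ(α+k) (k−l)! l!)) δ_{k,k'} δ_{l,l'}. -/

import Mathlib

/-!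
The integrand separates into a factor in `w` and a factor in `φ`, so the relation is the product of
the orthogonality relations of the Jacobi and of the Gegenbauer polynomials. If `k - l ≠ k' - l'` the
angular integral vanishes; if `k - l = k' - l'`, both radial polynomials belong to the same Jacobi
family and the radial integral gives `δ_{l,l'}`.

Both one-variable relations are instances of one: for `A, B > 0` the polynomials
`₂F₁(-p, p + A + B - 1; A; t)` are orthogonal on `(0, 1)` for `t ^ (A - 1) * (1 - t) ^ (B - 1)`
(`integral_hypPoly_mul`). To see this, integrate such a polynomial against `(1 - t) ^ j`, `j ≤ p`: the
Beta integrals add up to a `₂F₁` at `1`, which by Chu–Vandermonde is zero for `j < p` and explicit for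
`j = p`.

The radial factor is the case `A = α - β`, `B = β + (k - l) + 1`, after `t = 1 - w ^ 2`. A Gegenbauer
polynomial of even degree (resp. odd degree) is, up to a scalar, such a polynomial in `t = cos φ ^ 2`
with `A = 1 / 2` (resp. `A = 3 / 2`, times `cos φ`) and `B = β + 1 / 2`; polynomials of different parity
are orthogonal by the symmetry `φ ↦ π - φ`. Legendre's duplication formula puts the angular norm
into its usual form (`gegenNorm_even`, `gegenNorm_odd`).
-/

open Complex Filter MeasureTheory

noncomputable section

/-- Pochhammer symbol `(a)_k`. -/
def poch (a : ℂ) (k : ℕ) : ℂ := ∏ i ∈ Finset.range k, (a + (i : ℂ))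

/-- Olver-regularized Gauss hypergeometric function `₂𝐅₁(a,b;c;z)` (defined by its series). -/
def hyp (a b c z : ℂ) : ℂ :=
  ∑' k : ℕ, poch a k * poch b k / (Complex.Gamma (c + (k : ℂ)) * (Nat.factorial k : ℂ)) * z ^ k

/-- Jacobi function of the first kind `P_γ^{(α,β)}(z)`. -/
def JacobiP (γ α β z : ℂ) : ℂ :=
  Complex.Gamma (α + γ + 1) / Complex.Gamma (γ + 1) *
    hyp (-γ) (α + β + γ + 1) (α + 1) ((1 - z) / 2)

/-- Jacobi function of the second kind `Q_γ^{(α,β)}(z)`. -/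
def JacobiQ (γ α β z : ℂ) : ℂ :=
  (2 : ℂ) ^ (α + β + γ) * Complex.Gamma (α + γ + 1) * Complex.Gamma (β + γ + 1) *
    (z - 1) ^ (-α - γ - 1) * (z + 1) ^ (-β) *
    hyp (γ + 1) (α + γ + 1) (α + β + 2 * γ + 2) (2 / (1 - z))

/-- Jacobi polynomial `P_n^{(α,β)}(x)`. -/
def JacobiPoly (n : ℕ) (α β x : ℂ) : ℂ :=
  poch (α + 1) n / (Nat.factorial n : ℂ) *
    ∑ k ∈ Finset.range (n + 1),
      poch (-(n : ℂ)) k * poch ((n : ℂ) + α + β + 1) k /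
        (poch (α + 1) k * (Nat.factorial k : ℂ)) * ((1 - x) / 2) ^ k

/-- Gegenbauer polynomial `C_n^μ(x)`. -/
def GegenbauerC (n : ℕ) (μ x : ℂ) : ℂ :=
  ∑ j ∈ Finset.range (n / 2 + 1),
    (-1 : ℂ) ^ j * poch μ (n - j) /
      ((Nat.factorial j : ℂ) * (Nat.factorial (n - 2 * j) : ℂ)) * (2 * x) ^ (n - 2 * j)

/-- Jacobi function of the second kind on-the-cut `𝖰_γ^{(α,β)}(x)`. -/
def JacobiQcut (γ α β : ℂ) (x : ℝ) : ℂ :=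
  (1 / 2) * (Complex.exp (Real.pi * Complex.I * α) *
      limUnder (nhdsWithin 0 (Set.Ioi (0 : ℝ)))
        (fun ε : ℝ => JacobiQ γ α β ((x : ℂ) + ε * Complex.I)) +
    Complex.exp (-(Real.pi * Complex.I * α)) *
      limUnder (nhdsWithin 0 (Set.Ioi (0 : ℝ)))
        (fun ε : ℝ => JacobiQ γ α β ((x : ℂ) - ε * Complex.I)))

/-- Associated Legendre function of the second kind `Q_ν^μ(z)`. -/
def LegendreQ (ν μ z : ℂ) : ℂ :=
  (Real.sqrt Real.pi : ℂ) * Complex.exp (Real.pi * Complex.I * μ) * Complex.Gamma (ν + μ + 1) *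
    (z + 1) ^ (μ / 2) * (z - 1) ^ (μ / 2) * (2 : ℂ) ^ (-ν - 1) * z ^ (-ν - μ - 1) *
    hyp ((ν + μ + 1) / 2) ((ν + μ + 2) / 2) (ν + 3 / 2) (1 / z ^ 2)

/-- Ferrers function of the second kind `𝖰_ν^μ(x)`. -/
def FerrersQ (ν μ : ℂ) (x : ℝ) : ℂ :=
  Complex.exp (-(Real.pi * Complex.I * μ)) / 2 *
    (Complex.exp (-(Real.pi * Complex.I * μ / 2)) *
        limUnder (nhdsWithin 0 (Set.Ioi (0 : ℝ)))
          (fun ε : ℝ => LegendreQ ν μ ((x : ℂ) + ε * Complex.I)) +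
      Complex.exp (Real.pi * Complex.I * μ / 2) *
        limUnder (nhdsWithin 0 (Set.Ioi (0 : ℝ)))
          (fun ε : ℝ => LegendreQ ν μ ((x : ℂ) - ε * Complex.I)))

/-- Gegenbauer function of the second kind `D_λ^μ(z)`. -/
def GegenbauerD (lam μ z : ℂ) : ℂ :=
  Complex.exp (Real.pi * Complex.I * μ) * Complex.Gamma (lam + 2 * μ) / Complex.Gamma μ *
    (2 * z) ^ (-lam - 2 * μ) *
    hyp (lam / 2 + μ) (lam / 2 + μ + 1 / 2) (lam + μ + 1) (1 / z ^ 2)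

/-- Gegenbauer function of the second kind on-the-cut `𝖣_λ^μ(x)`. -/
def GegenbauerDcut (lam μ : ℂ) (x : ℝ) : ℂ :=
  -Complex.I * limUnder (nhdsWithin 0 (Set.Ioi (0 : ℝ)))
      (fun ε : ℝ => GegenbauerD lam μ ((x : ℂ) + ε * Complex.I)) +
    Complex.I * Complex.exp (-(2 * Real.pi * Complex.I * μ)) *
      limUnder (nhdsWithin 0 (Set.Ioi (0 : ℝ)))
        (fun ε : ℝ => GegenbauerD lam μ ((x : ℂ) - ε * Complex.I))

/-- Gegenbauer function of the first kind `C_λ^μ(z)`. -/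
def GegenbauerFn (lam μ z : ℂ) : ℂ :=
  (Real.sqrt Real.pi : ℂ) * Complex.Gamma (lam + 2 * μ) /
    ((2 : ℂ) ^ (2 * μ - 1) * Complex.Gamma μ * Complex.Gamma (lam + 1)) *
    hyp (-lam) (2 * μ + lam) (μ + 1 / 2) ((1 - z) / 2)


/-- The parabolic biangle polynomials `𝒫_{k,l}^{(α,β)}(w,φ)`. -/
def biangle (α β : ℝ) (k l : ℕ) (w φ : ℝ) : ℂ :=
  (w : ℂ) ^ (k - l) *
    JacobiPoly l ((α : ℂ) - (β : ℂ) - 1) ((β : ℂ) + ((k - l : ℕ) : ℂ))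
      (2 * (w : ℂ) ^ 2 - 1) *
    GegenbauerC (k - l) (β : ℂ) ((Real.cos φ : ℝ) : ℂ)

/-! ### Pochhammer symbols and the Chu–Vandermonde sum -/

lemma poch_zero (a : ℂ) : poch a 0 = 1 := by simp [poch]

lemma poch_succ (a : ℂ) (n : ℕ) : poch a (n + 1) = poch a n * (a + n) := by
  simp [poch, Finset.prod_range_succ]

lemma poch_succ_left (a : ℂ) (n : ℕ) : poch a (n + 1) = a * poch (a + 1) n := by
  simp only [poch, Finset.prod_range_succ', Nat.cast_add, Nat.cast_one, Nat.cast_zero, add_zero]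
  rw [mul_comm]
  congr 1
  exact Finset.prod_congr rfl fun i _ => by ring

lemma poch_add (a : ℂ) (m n : ℕ) : poch a (m + n) = poch a m * poch (a + m) n := by
  induction n with
  | zero => simp [poch_zero]
  | succ n ih => rw [← add_assoc, poch_succ, poch_succ, ih]; push_cast; ring

lemma poch_ne_zero {a : ℂ} (ha : ∀ m : ℕ, a ≠ -m) (n : ℕ) : poch a n ≠ 0 := by
  refine Finset.prod_ne_zero_iff.2 fun i _ h => ha i ?_
  linear_combination h

lemma Gamma_add_nat {a : ℂ} (ha : ∀ m : ℕ, a ≠ -m) (n : ℕ) :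
    Complex.Gamma (a + n) = poch a n * Complex.Gamma a := by
  induction n with
  | zero => simp [poch_zero]
  | succ n ih =>
    have h : a + n ≠ 0 := fun h => ha n (by linear_combination h)
    rw [Nat.cast_succ, ← add_assoc, Complex.Gamma_add_one _ h, ih, poch_succ]
    ring

lemma poch_one (n : ℕ) : poch 1 n = (n.factorial : ℂ) := by
  induction n with
  | zero => simp [poch_zero]
  | succ n ih => rw [poch_succ, ih, Nat.factorial_succ]; push_cast; ring

lemma poch_neg_nat (p i : ℕ) (hi : i ≤ p) :
    poch (-(p : ℂ)) i = (-1) ^ i * (p.factorial : ℂ) / ((p - i).factorial : ℂ) := by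
  induction i with
  | zero => simp [poch_zero, Nat.factorial_ne_zero]
  | succ i ih =>
    obtain ⟨r, rfl⟩ := Nat.exists_eq_add_of_le hi
    rw [poch_succ, ih (by omega), show i + 1 + r - i = r + 1 by omega,
      show i + 1 + r - (i + 1) = r by omega, Nat.factorial_succ]
    have h1 : (r.factorial : ℂ) ≠ 0 := by exact_mod_cast Nat.factorial_ne_zero r
    have h2 : (r : ℂ) + 1 ≠ 0 := by exact_mod_cast Nat.succ_ne_zero r
    push_cast
    field_simp
    ring

/-- Division-free Chu–Vandermonde identity. Pascal's rule turns the sum for `(p + 1, c, d)` into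
`d - c` times the sum for `(p, c, d + 1)`. -/
lemma chu_vandermonde_aux (p : ℕ) (c d : ℂ) :
    ∑ i ∈ Finset.range (p + 1), (-1) ^ i * (p.choose i : ℂ) * poch c i * poch (d + i) (p - i)
      = poch (d - c) p := by
  induction p generalizing d with
  | zero => simp [poch_zero]
  | succ p ih =>
    have h1 : ∑ i ∈ Finset.range (p + 2),
          (-1) ^ i * ((p + 1).choose i : ℂ) * poch c i * poch (d + i) (p + 1 - i)
        = ∑ i ∈ Finset.range (p + 1),
            (-1) ^ i * (p.choose i : ℂ) * poch c i * poch (d + i) (p + 1 - i)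
          + ∑ i ∈ Finset.range (p + 1),
            (-1) ^ (i + 1) * (p.choose i : ℂ) * poch c (i + 1) * poch (d + i + 1) (p - i) := by
      have e : ∑ i ∈ Finset.range (p + 1),
            (-1) ^ i * (p.choose i : ℂ) * poch c i * poch (d + i) (p + 1 - i)
          = ∑ i ∈ Finset.range (p + 2),
            (-1) ^ i * (p.choose i : ℂ) * poch c i * poch (d + i) (p + 1 - i) := by
        rw [Finset.sum_range_succ _ (p + 1)]; simp
      rw [e, Finset.sum_range_succ' _ (p + 1), Finset.sum_range_succ' _ (p + 1),
        add_right_comm, ← Finset.sum_add_distrib]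
      congr 1
      · refine Finset.sum_congr rfl fun i _ => ?_
        rw [Nat.choose_succ_succ, Nat.add_sub_add_right]
        push_cast
        rw [← add_assoc d]
        ring
      · simp
    rw [h1, ← Finset.sum_add_distrib, poch_succ_left, show d - c + 1 = d + 1 - c by ring,
      ← ih (d + 1), Finset.mul_sum]
    refine Finset.sum_congr rfl fun i hi => ?_
    have hi' : i ≤ p := by simpa [Nat.lt_succ_iff] using hi
    rw [Nat.succ_sub hi', Nat.succ_eq_add_one, poch_succ_left (d + i), poch_succ c,
      add_right_comm d 1]
    ring

/-- The Chu–Vandermonde sum `₂F₁(-p, c; d; 1) = (d - c)_p / (d)_p`. -/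
lemma chu_vandermonde (p : ℕ) (c : ℂ) {d : ℂ} (hd : ∀ m : ℕ, d ≠ -m) :
    ∑ i ∈ Finset.range (p + 1), poch (-(p : ℂ)) i * poch c i / (poch d i * (i.factorial : ℂ))
      = poch (d - c) p / poch d p := by
  rw [← chu_vandermonde_aux, Finset.sum_div]
  refine Finset.sum_congr rfl fun i hi => ?_
  have hi' : i ≤ p := by simpa [Nat.lt_succ_iff] using hi
  have hp : poch d p = poch d i * poch (d + i) (p - i) := by
    rw [← poch_add, Nat.add_sub_cancel' hi']
  have hne := poch_ne_zero hd p
  rw [hp] at hne ⊢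
  have hA := left_ne_zero_of_mul hne
  have hB := right_ne_zero_of_mul hne
  rw [poch_neg_nat p i hi', Nat.cast_choose ℂ hi']
  have h1 : (i.factorial : ℂ) ≠ 0 := by exact_mod_cast Nat.factorial_ne_zero i
  have h2 : ((p - i).factorial : ℂ) ≠ 0 := by exact_mod_cast Nat.factorial_ne_zero _
  field_simp

/-! ### Orthogonality for the Beta weight -/

/-- The terminating Gauss series `₂F₁(-p, p + c - 1; A; t)`. For `c = A + B` it is, up to a scalar,
the Jacobi polynomial on `(0, 1)` orthogonal for the weight `t ^ (A - 1) * (1 - t) ^ (B - 1)`. -/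
def hypPoly (p : ℕ) (A c t : ℂ) : ℂ :=
  ∑ i ∈ Finset.range (p + 1),
    poch (-(p : ℂ)) i * poch (p + c - 1) i / (poch A i * (i.factorial : ℂ)) * t ^ i

/-- The Beta weight `t ^ (A - 1) * (1 - t) ^ (B - 1)`, as a complex number. -/
def betaWt (A B t : ℝ) : ℂ := ((t ^ (A - 1) * (1 - t) ^ (B - 1) : ℝ) : ℂ)

lemma ofReal_ne_neg_nat {a : ℝ} (ha : 0 < a) (m : ℕ) : (a : ℂ) ≠ -m := by
  intro h
  have h' : a = -(m : ℝ) := by exact_mod_cast h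
  have := Nat.cast_nonneg (α := ℝ) m
  linarith

lemma betaWt_eq {t : ℝ} (ht : t ∈ Set.Ioo (0 : ℝ) 1) (A B : ℝ) :
    betaWt A B t = (t : ℂ) ^ ((A : ℂ) - 1) * (1 - (t : ℂ)) ^ ((B : ℂ) - 1) := by
  rw [betaWt, Complex.ofReal_mul, Complex.ofReal_cpow ht.1.le,
    Complex.ofReal_cpow (sub_nonneg.2 ht.2.le)]
  push_cast
  rfl

lemma integrableOn_betaWt {A B : ℝ} (hA : 0 < A) (hB : 0 < B) :
    IntegrableOn (betaWt A B) (Set.Ioo 0 1) := by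
  have h := Complex.betaIntegral_convergent (u := A) (v := B) (by simpa) (by simpa)
  rw [intervalIntegrable_iff_integrableOn_Ioo_of_le zero_le_one] at h
  exact h.congr_fun (fun t ht => (betaWt_eq ht A B).symm) measurableSet_Ioo

lemma integrableOn_mul_betaWt {A B : ℝ} (hA : 0 < A) (hB : 0 < B) {f : ℝ → ℂ}
    (hf : Continuous f) : IntegrableOn (fun t => f t * betaWt A B t) (Set.Ioo 0 1) := by
  have h := integrableOn_betaWt hA hB
  rw [← integrableOn_Icc_iff_integrableOn_Ioo] at h ⊢
  exact h.continuousOn_mul hf.continuousOn isCompact_Icc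

lemma integral_betaWt {A B : ℝ} (hA : 0 < A) (hB : 0 < B) :
    ∫ t in Set.Ioo (0 : ℝ) 1, betaWt A B t
      = Complex.Gamma A * Complex.Gamma B / Complex.Gamma (A + B) := by
  have h := Complex.Gamma_mul_Gamma_eq_betaIntegral (s := A) (t := B) (by simpa) (by simpa)
  have hne : Complex.Gamma ((A : ℂ) + B) ≠ 0 :=
    Complex.Gamma_ne_zero fun m => by
      have := ofReal_ne_neg_nat (add_pos hA hB) m
      push_cast at this
      exact this
  rw [h, mul_div_cancel_left₀ _ hne, Complex.betaIntegral,
    intervalIntegral.integral_of_le zero_le_one, integral_Ioc_eq_integral_Ioo]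
  exact setIntegral_congr_fun measurableSet_Ioo fun t ht => betaWt_eq ht A B

lemma betaWt_shift {t : ℝ} (ht : t ∈ Set.Ioo (0 : ℝ) 1) (A B : ℝ) (i j : ℕ) :
    (t : ℂ) ^ i * (1 - (t : ℂ)) ^ j * betaWt A B t = betaWt (A + i) (B + j) t := by
  have h1 : t ^ (A + i - 1) = t ^ (A - 1) * t ^ i := by
    rw [← Real.rpow_natCast, ← Real.rpow_add ht.1]; congr 1; ring
  have h2 : (1 - t) ^ (B + j - 1) = (1 - t) ^ (B - 1) * (1 - t) ^ j := by
    rw [← Real.rpow_natCast, ← Real.rpow_add (sub_pos.2 ht.2)]; congr 1; ring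
  rw [betaWt, betaWt, h1, h2]
  push_cast
  ring

lemma integral_moment {A B : ℝ} (hA : 0 < A) (hB : 0 < B) (i j : ℕ) :
    ∫ t in Set.Ioo (0 : ℝ) 1, (t : ℂ) ^ i * (1 - (t : ℂ)) ^ j * betaWt A B t
      = poch A i * Complex.Gamma A * Complex.Gamma (B + j) /
        (poch (A + B + j) i * Complex.Gamma (A + B + j)) := by
  rw [setIntegral_congr_fun measurableSet_Ioo fun t ht => betaWt_shift ht A B i j,
    integral_betaWt (by positivity) (by positivity)]
  have h : ∀ m : ℕ, (A : ℂ) + B + j ≠ -m := fun m => by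
    have := ofReal_ne_neg_nat (a := A + B + j) (by positivity) m
    push_cast at this
    exact this
  rw [← Gamma_add_nat (ofReal_ne_neg_nat hA), ← Gamma_add_nat h]
  push_cast
  congr 2
  ring

lemma continuous_hypPoly (p : ℕ) (A c : ℂ) : Continuous fun t : ℝ => hypPoly p A c t := by
  unfold hypPoly
  fun_prop

/-- The numerator of the Chu–Vandermonde sum: it vanishes for `j < p` because the factor with index
`p - 1 - j` is zero. -/
lemma poch_orth (p j : ℕ) (hj : j ≤ p) :
    poch ((j : ℂ) + 1 - p) p = if j = p then (p.factorial : ℂ) else 0 := by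
  split_ifs with h
  · subst h; rw [add_sub_cancel_left, poch_one]
  · refine Finset.prod_eq_zero (Finset.mem_range.2 (show p - 1 - j < p by omega)) ?_
    rw [Nat.sub_sub, Nat.cast_sub (by omega)]
    push_cast
    ring

/-- Testing against powers of `1 - t`, rather than of `t`, cancels `(A)_i` and leaves a `₂F₁` at `1`,
which Chu–Vandermonde sums. -/
lemma integral_hypPoly_one_sub {A B : ℝ} (hA : 0 < A) (hB : 0 < B) (p j : ℕ) (hj : j ≤ p) :
    ∫ t in Set.Ioo (0 : ℝ) 1, (1 - (t : ℂ)) ^ j * hypPoly p A (A + B) t * betaWt A B t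
      = if j = p then Complex.Gamma A * Complex.Gamma (B + p) * p.factorial /
          Complex.Gamma (A + B + 2 * p) else 0 := by
  have hc : ∀ m : ℕ, (A : ℂ) + B + j ≠ -m := fun m => by
    have := ofReal_ne_neg_nat (a := A + B + j) (by positivity) m
    push_cast at this
    exact this
  have e : ∀ t : ℝ, (1 - (t : ℂ)) ^ j * hypPoly p A (A + B) t * betaWt A B t
      = ∑ i ∈ Finset.range (p + 1),
        poch (-(p : ℂ)) i * poch (p + (A + B) - 1) i / (poch A i * (i.factorial : ℂ)) *
          ((t : ℂ) ^ i * (1 - (t : ℂ)) ^ j * betaWt A B t) := fun t => by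
    rw [hypPoly, Finset.mul_sum, Finset.sum_mul]
    exact Finset.sum_congr rfl fun i _ => by ring
  simp_rw [e]
  rw [integral_finsetSum _ fun i _ =>
    (integrableOn_mul_betaWt hA hB (by fun_prop)).integrable.const_mul _]
  simp_rw [integral_const_mul, integral_moment hA hB]
  have e2 : ∀ i ∈ Finset.range (p + 1),
      poch (-(p : ℂ)) i * poch (p + (A + B) - 1) i / (poch A i * (i.factorial : ℂ)) *
        (poch A i * Complex.Gamma A * Complex.Gamma (B + j) /
        (poch (A + B + j) i * Complex.Gamma (A + B + j)))
      = Complex.Gamma A * Complex.Gamma (B + j) / Complex.Gamma (A + B + j) *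
        (poch (-(p : ℂ)) i * poch (p + (A + B) - 1) i /
          (poch (A + B + j) i * (i.factorial : ℂ))) := fun i _ => by
    have := poch_ne_zero (ofReal_ne_neg_nat hA) i
    field_simp
  rw [Finset.sum_congr rfl e2, ← Finset.mul_sum, chu_vandermonde p _ hc,
    show (A : ℂ) + B + j - (p + (A + B) - 1) = j + 1 - p by ring, poch_orth p j hj]
  split_ifs with h
  · subst h
    rw [show (A : ℂ) + B + 2 * j = A + B + j + j by ring, Gamma_add_nat hc]
    field_simp
  · simp

/-- Passage from powers of `1 - t` to powers of `t`, by induction on `m` through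
`t ^ (m + 1) * (1 - t) ^ j = t ^ m * (1 - t) ^ j - t ^ m * (1 - t) ^ (j + 1)`. -/
lemma integral_hypPoly_pow {A B : ℝ} (hA : 0 < A) (hB : 0 < B) (p m j : ℕ) (hj : m + j ≤ p) :
    ∫ t in Set.Ioo (0 : ℝ) 1,
        (t : ℂ) ^ m * (1 - (t : ℂ)) ^ j * hypPoly p A (A + B) t * betaWt A B t
      = if m + j = p then (-1) ^ m * (Complex.Gamma A * Complex.Gamma (B + p) * p.factorial /
          Complex.Gamma (A + B + 2 * p)) else 0 := by
  induction m generalizing j with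
  | zero => simpa using integral_hypPoly_one_sub hA hB p j (by omega)
  | succ m ih =>
    have hcont := continuous_hypPoly p A (A + B)
    have e : ∀ t : ℝ,
        (t : ℂ) ^ (m + 1) * (1 - (t : ℂ)) ^ j * hypPoly p A (A + B) t * betaWt A B t
        = (t : ℂ) ^ m * (1 - (t : ℂ)) ^ j * hypPoly p A (A + B) t * betaWt A B t
          - (t : ℂ) ^ m * (1 - (t : ℂ)) ^ (j + 1) * hypPoly p A (A + B) t * betaWt A B t :=
      fun t => by ring
    simp_rw [e]
    rw [integral_sub (integrableOn_mul_betaWt hA hB (by fun_prop))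
      (integrableOn_mul_betaWt hA hB (by fun_prop)), ih j (by omega), ih (j + 1) (by omega),
      if_neg (by omega), show m + (j + 1) = m + 1 + j by ring]
    split_ifs <;> ring

/-- The squared norm of `hypPoly p A (A + B)` for the weight `betaWt A B`. -/
def hypNorm (p : ℕ) (A B : ℂ) : ℂ :=
  poch (p + (A + B) - 1) p / poch A p *
    (Complex.Gamma A * Complex.Gamma (B + p) * p.factorial / Complex.Gamma (A + B + 2 * p))

lemma integral_hypPoly_mul_of_le {A B : ℝ} (hA : 0 < A) (hB : 0 < B) (p q : ℕ) (hq : q ≤ p) :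
    ∫ t in Set.Ioo (0 : ℝ) 1, hypPoly q A (A + B) t * hypPoly p A (A + B) t * betaWt A B t
      = if q = p then hypNorm p A B else 0 := by
  have hcont := continuous_hypPoly p A (A + B)
  have e : ∀ t : ℝ, hypPoly q A (A + B) t * hypPoly p A (A + B) t * betaWt A B t
      = ∑ i ∈ Finset.range (q + 1),
        poch (-(q : ℂ)) i * poch (q + (A + B) - 1) i / (poch A i * (i.factorial : ℂ)) *
          ((t : ℂ) ^ i * (1 - (t : ℂ)) ^ 0 * hypPoly p A (A + B) t * betaWt A B t) := fun t => by
    rw [hypPoly, Finset.sum_mul, Finset.sum_mul]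
    exact Finset.sum_congr rfl fun i _ => by ring
  simp_rw [e]
  rw [integral_finsetSum _ fun i _ =>
    (integrableOn_mul_betaWt hA hB (by fun_prop)).integrable.const_mul _]
  simp_rw [integral_const_mul]
  rw [Finset.sum_congr rfl fun i hi => by
    rw [integral_hypPoly_pow hA hB p i 0 (by have := Finset.mem_range.1 hi; omega)]]
  rw [Finset.sum_range_succ, Finset.sum_eq_zero fun i hi => by
    rw [if_neg (by have := Finset.mem_range.1 hi; omega), mul_zero]]
  simp only [add_zero, zero_add]
  split_ifs with h
  · subst h
    rw [poch_neg_nat q q le_rfl, hypNorm]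
    have h1 : (q.factorial : ℂ) ≠ 0 := by exact_mod_cast Nat.factorial_ne_zero q
    simp only [Nat.sub_self, Nat.factorial_zero, Nat.cast_one, div_one]
    rcases neg_one_pow_eq_or ℂ q with h | h <;> rw [h] <;> field_simp
  · simp

lemma integral_hypPoly_mul {A B : ℝ} (hA : 0 < A) (hB : 0 < B) (p q : ℕ) :
    ∫ t in Set.Ioo (0 : ℝ) 1, hypPoly p A (A + B) t * hypPoly q A (A + B) t * betaWt A B t
      = if p = q then hypNorm p A B else 0 := by
  rcases le_total p q with h | h
  · rw [integral_hypPoly_mul_of_le hA hB q p h]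
    split_ifs with h' <;> simp [h']
  · simp_rw [mul_comm (hypPoly p A (A + B) _)]
    rw [integral_hypPoly_mul_of_le hA hB p q h]
    simp only [eq_comm]

/-! ### Changes of variables -/

/-- The substitution `t = 1 - w ^ 2`. -/
lemma integral_sub_sq (G : ℝ → ℂ) :
    ∫ w in Set.Ioo (0 : ℝ) 1, (2 * (w : ℂ)) * G (1 - w ^ 2) = ∫ t in Set.Ioo (0 : ℝ) 1, G t := by
  have himg : (fun w : ℝ => 1 - w ^ 2) '' Set.Ioo 0 1 = Set.Ioo 0 1 := by
    ext t
    constructor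
    · rintro ⟨w, ⟨h0, h1⟩, rfl⟩
      constructor <;> simp only <;> nlinarith
    · rintro ⟨h0, h1⟩
      refine ⟨√(1 - t), ⟨Real.sqrt_pos.2 (by linarith), ?_⟩, ?_⟩
      · rw [Real.sqrt_lt' one_pos]; linarith
      · simp only
        rw [Real.sq_sqrt (by linarith)]; ring
  have hder : ∀ w ∈ Set.Ioo (0 : ℝ) 1,
      HasDerivWithinAt (fun w : ℝ => 1 - w ^ 2) (-(2 * w)) (Set.Ioo 0 1) w := fun w _ => by
    simpa using ((hasDerivAt_pow 2 w).const_sub 1).hasDerivWithinAt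
  have hinj : Set.InjOn (fun w : ℝ => 1 - w ^ 2) (Set.Ioo 0 1) := by
    intro x hx y hy h
    simp only at h
    exact (pow_left_inj₀ hx.1.le hy.1.le two_ne_zero).1 (by linarith)
  have h := integral_image_eq_integral_abs_deriv_smul measurableSet_Ioo hder hinj G
  rw [himg] at h
  rw [h]
  refine setIntegral_congr_fun measurableSet_Ioo fun w hw => ?_
  rw [abs_neg, abs_of_pos (by linarith [hw.1]), Complex.real_smul]
  push_cast
  rfl

lemma image_cos_sq : (fun φ : ℝ => Real.cos φ ^ 2) '' Set.Ioo 0 (Real.pi / 2) = Set.Ioo 0 1 := by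
  ext t
  constructor
  · rintro ⟨φ, ⟨h0, h1⟩, rfl⟩
    have hc : 0 < Real.cos φ := Real.cos_pos_of_mem_Ioo ⟨by linarith, h1⟩
    have hs : 0 < Real.sin φ := Real.sin_pos_of_pos_of_lt_pi h0 (by linarith)
    have := Real.sin_sq_add_cos_sq φ
    constructor <;> simp only <;> nlinarith
  · rintro ⟨h0, h1⟩
    have hs0 : 0 < √t := Real.sqrt_pos.2 h0
    have hs1 : √t < 1 := by rw [Real.sqrt_lt' one_pos]; linarith
    refine ⟨Real.arccos √t, ⟨Real.arccos_pos.2 hs1, Real.arccos_lt_pi_div_two.2 hs0⟩, ?_⟩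
    simp only
    rw [Real.cos_arccos (by linarith) hs1.le, Real.sq_sqrt h0.le]

lemma cos_sq_wt {β φ : ℝ} (hφ : φ ∈ Set.Ioo 0 (Real.pi / 2)) (F : ℝ → ℂ) :
    |(-(2 * Real.cos φ * Real.sin φ))| •
        (F (Real.cos φ ^ 2) * betaWt (1 / 2) (β + 1 / 2) (Real.cos φ ^ 2))
      = 2 * (F (Real.cos φ ^ 2) * ((Real.sin φ ^ (2 * β) : ℝ) : ℂ)) := by
  have hc : 0 < Real.cos φ := Real.cos_pos_of_mem_Ioo ⟨by linarith [hφ.1, Real.pi_pos], hφ.2⟩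
  have hs : 0 < Real.sin φ :=
    Real.sin_pos_of_pos_of_lt_pi hφ.1 (by linarith [hφ.2, Real.pi_pos])
  have e1 : (Real.cos φ ^ 2) ^ ((1 : ℝ) / 2 - 1) = (Real.cos φ)⁻¹ := by
    rw [← Real.rpow_natCast, ← Real.rpow_mul hc.le, ← Real.rpow_neg_one]
    norm_num
  have e2 : (1 - Real.cos φ ^ 2) ^ (β + 1 / 2 - 1) = Real.sin φ ^ (2 * β) * (Real.sin φ)⁻¹ := by
    rw [← Real.sin_sq, ← Real.rpow_natCast, ← Real.rpow_mul hs.le, ← Real.rpow_neg_one,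
      ← Real.rpow_add hs]
    congr 1
    push_cast
    ring
  rw [betaWt, e1, e2, abs_neg, abs_of_pos (by positivity), Complex.real_smul]
  have hc' : (Real.cos φ : ℂ) ≠ 0 := by exact_mod_cast hc.ne'
  have hs' : (Real.sin φ : ℂ) ≠ 0 := by exact_mod_cast hs.ne'
  simp only [Complex.ofReal_mul, Complex.ofReal_inv, Complex.ofReal_ofNat]
  field_simp

/-- The substitution `t = cos φ ^ 2` on `(0, π / 2)`, together with the symmetry `φ ↦ π - φ`. -/
lemma integral_comp_cos_sq {β : ℝ} (hβ : -1 / 2 < β) {F : ℝ → ℂ} (hF : Continuous F) :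
    ∫ φ in Set.Ioo (0 : ℝ) Real.pi, F (Real.cos φ ^ 2) * ((Real.sin φ ^ (2 * β) : ℝ) : ℂ)
      = ∫ t in Set.Ioo (0 : ℝ) 1, F t * betaWt (1 / 2) (β + 1 / 2) t := by
  have hpi := Real.pi_pos
  have hder : ∀ φ ∈ Set.Ioo (0 : ℝ) (Real.pi / 2),
      HasDerivWithinAt (fun φ : ℝ => Real.cos φ ^ 2) (-(2 * Real.cos φ * Real.sin φ))
        (Set.Ioo 0 (Real.pi / 2)) φ := fun φ _ => by
    have := ((Real.hasDerivAt_cos φ).pow 2).hasDerivWithinAt (s := Set.Ioo 0 (Real.pi / 2))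
    refine HasDerivWithinAt.congr_deriv this ?_
    simp
  have hinj : Set.InjOn (fun φ : ℝ => Real.cos φ ^ 2) (Set.Ioo 0 (Real.pi / 2)) := by
    intro x hx y hy h
    have hcx : 0 < Real.cos x := Real.cos_pos_of_mem_Ioo ⟨by linarith [hx.1], hx.2⟩
    have hcy : 0 < Real.cos y := Real.cos_pos_of_mem_Ioo ⟨by linarith [hy.1], hy.2⟩
    exact Real.injOn_cos ⟨hx.1.le, by linarith [hx.2]⟩ ⟨hy.1.le, by linarith [hy.2]⟩
      ((pow_left_inj₀ hcx.le hcy.le two_ne_zero).1 h)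
  set G : ℝ → ℂ := fun t => F t * betaWt (1 / 2) (β + 1 / 2) t with hG
  set f : ℝ → ℂ := fun φ => F (Real.cos φ ^ 2) * ((Real.sin φ ^ (2 * β) : ℝ) : ℂ) with hf
  have hI := integral_image_eq_integral_abs_deriv_smul measurableSet_Ioo hder hinj G
  have hint := (integrableOn_image_iff_integrableOn_abs_deriv_smul measurableSet_Ioo hder hinj G).1
    (by rw [image_cos_sq]; exact integrableOn_mul_betaWt (by norm_num) (by linarith) hF)
  have hcongr : Set.EqOn (fun φ => |(-(2 * Real.cos φ * Real.sin φ))| • G (Real.cos φ ^ 2))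
      (fun φ => 2 * f φ) (Set.Ioo 0 (Real.pi / 2)) := fun φ hφ => cos_sq_wt hφ F
  rw [image_cos_sq, setIntegral_congr_fun measurableSet_Ioo hcongr, integral_const_mul,
    ← integral_Ioc_eq_integral_Ioo (y := Real.pi / 2),
    ← intervalIntegral.integral_of_le (by linarith)] at hI
  have hint2 : IntervalIntegrable f volume 0 (Real.pi / 2) := by
    rw [intervalIntegrable_iff_integrableOn_Ioo_of_le (by linarith)]
    have := (hint.congr_fun hcongr measurableSet_Ioo).integrable.const_mul (1 / 2 : ℂ)
    refine this.congr (ae_of_all _ fun φ => ?_)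
    ring
  have hsymm : ∀ φ, f (Real.pi - φ) = f φ := fun φ => by
    simp [hf, Real.cos_pi_sub, Real.sin_pi_sub]
  have hint3 : IntervalIntegrable f volume (Real.pi / 2) Real.pi := by
    have := (hint2.comp_sub_left Real.pi).symm
    simp only [hsymm] at this
    convert this using 1 <;> ring
  have hrefl : ∫ φ in (Real.pi / 2)..Real.pi, f φ = ∫ φ in (0 : ℝ)..(Real.pi / 2), f φ := by
    have := intervalIntegral.integral_comp_sub_left (a := 0) (b := Real.pi / 2) f Real.pi
    simp only [hsymm] at this
    rw [this]
    congr 1 <;> ring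
  rw [hI, ← integral_Ioc_eq_integral_Ioo, ← intervalIntegral.integral_of_le hpi.le,
    ← intervalIntegral.integral_add_adjacent_intervals hint2 hint3, hrefl]
  ring

lemma integral_odd_eq_zero {f : ℝ → ℂ} (hf : ∀ φ, f (Real.pi - φ) = -f φ) :
    ∫ φ in Set.Ioo (0 : ℝ) Real.pi, f φ = 0 := by
  rw [← integral_Ioc_eq_integral_Ioo, ← intervalIntegral.integral_of_le Real.pi_pos.le]
  have := intervalIntegral.integral_comp_sub_left (a := 0) (b := Real.pi) f Real.pi
  simp only [hf, sub_self, sub_zero, intervalIntegral.integral_neg] at this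
  exact self_eq_neg.1 this.symm

/-! ### Gegenbauer polynomials -/

lemma factorial_two_mul_eq (i : ℕ) :
    ((2 * i).factorial : ℂ) = 4 ^ i * i.factorial * poch (1 / 2) i := by
  induction i with
  | zero => simp [poch_zero]
  | succ i ih =>
    rw [show 2 * (i + 1) = 2 * i + 1 + 1 by ring, Nat.factorial_succ, Nat.factorial_succ,
      Nat.factorial_succ, poch_succ]
    push_cast
    rw [ih]
    ring

lemma factorial_two_mul_add_one_eq (i : ℕ) :
    ((2 * i + 1).factorial : ℂ) = 4 ^ i * i.factorial * poch (3 / 2) i := by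
  induction i with
  | zero => simp [poch_zero]
  | succ i ih =>
    rw [show 2 * (i + 1) + 1 = 2 * i + 1 + 1 + 1 by ring, Nat.factorial_succ, Nat.factorial_succ (2 * i + 1),
      Nat.factorial_succ i, poch_succ]
    rw [Nat.cast_mul, Nat.cast_mul, ih]
    push_cast
    ring

lemma poch_half_ne_zero (i : ℕ) : poch (1 / 2) i ≠ 0 := by
  have := poch_ne_zero (ofReal_ne_neg_nat (a := 1 / 2) (by norm_num)) i
  simpa using this

lemma poch_three_half_ne_zero (i : ℕ) : poch (3 / 2) i ≠ 0 := by
  have := poch_ne_zero (ofReal_ne_neg_nat (a := 3 / 2) (by norm_num)) i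
  simpa using this

/-- Even Gegenbauer polynomials are hypergeometric polynomials in `x ^ 2` with `A = 1 / 2`. -/
lemma GegenbauerC_even (p : ℕ) (β x : ℂ) :
    GegenbauerC (2 * p) β x
      = (-1) ^ p * poch β p / p.factorial * hypPoly p (1 / 2) (β + 1) (x ^ 2) := by
  rw [GegenbauerC, hypPoly, Nat.mul_div_cancel_left _ two_pos, ← Finset.sum_range_reflect,
    Finset.mul_sum]
  refine Finset.sum_congr rfl fun i hi => ?_
  have hi' : i ≤ p := by simpa [Nat.lt_succ_iff] using hi
  rw [poch_neg_nat p i hi']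
  obtain ⟨r, rfl⟩ := Nat.exists_eq_add_of_le hi'
  rw [show i + r + 1 - 1 - i = r by omega, show 2 * (i + r) - r = i + r + i by omega,
    show 2 * (i + r) - 2 * r = 2 * i by omega, show i + r - i = r by omega,
    factorial_two_mul_eq, poch_add β (i + r) i,
    show ((i + r : ℕ) : ℂ) + (β + 1) - 1 = β + (i + r : ℕ) by ring, pow_mul (2 * x) 2 i, mul_pow 2 x 2,
    mul_pow _ _ i, pow_add (-1 : ℂ)]
  have h1 : (r.factorial : ℂ) ≠ 0 := by exact_mod_cast Nat.factorial_ne_zero r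
  have h2 : (i.factorial : ℂ) ≠ 0 := by exact_mod_cast Nat.factorial_ne_zero i
  have h3 : ((i + r).factorial : ℂ) ≠ 0 := by exact_mod_cast Nat.factorial_ne_zero _
  have h4 := poch_half_ne_zero i
  have h5 : (2 : ℂ) ^ 2 = 4 := by norm_num
  rw [h5]
  rcases neg_one_pow_eq_or ℂ i with h | h <;> rw [h] <;> field_simp

/-- Odd Gegenbauer polynomials are `x` times hypergeometric polynomials in `x ^ 2` with `A = 3 / 2`. -/
lemma GegenbauerC_odd (p : ℕ) (β x : ℂ) :
    GegenbauerC (2 * p + 1) β x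
      = (-1) ^ p * poch β (p + 1) / p.factorial * (2 * x) * hypPoly p (3 / 2) (β + 2) (x ^ 2) := by
  rw [GegenbauerC, hypPoly, show (2 * p + 1) / 2 = p by omega, ← Finset.sum_range_reflect,
    Finset.mul_sum]
  refine Finset.sum_congr rfl fun i hi => ?_
  have hi' : i ≤ p := by simpa [Nat.lt_succ_iff] using hi
  rw [poch_neg_nat p i hi']
  obtain ⟨r, rfl⟩ := Nat.exists_eq_add_of_le hi'
  rw [show i + r + 1 - 1 - i = r by omega, show 2 * (i + r) + 1 - r = (i + r + 1) + i by omega,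
    show 2 * (i + r) + 1 - 2 * r = 2 * i + 1 by omega, show i + r - i = r by omega,
    factorial_two_mul_add_one_eq, poch_add β (i + r + 1) i,
    show ((i + r : ℕ) : ℂ) + (β + 2) - 1 = β + (i + r + 1 : ℕ) by push_cast; ring,
    pow_succ (2 * x), pow_mul (2 * x) 2 i, mul_pow 2 x 2,
    mul_pow _ _ i, pow_add (-1 : ℂ)]
  have h1 : (r.factorial : ℂ) ≠ 0 := by exact_mod_cast Nat.factorial_ne_zero r
  have h2 : (i.factorial : ℂ) ≠ 0 := by exact_mod_cast Nat.factorial_ne_zero i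
  have h3 : ((i + r).factorial : ℂ) ≠ 0 := by exact_mod_cast Nat.factorial_ne_zero _
  have h4 := poch_three_half_ne_zero i
  have h5 : (2 : ℂ) ^ 2 = 4 := by norm_num
  rw [h5]
  rcases neg_one_pow_eq_or ℂ i with h | h <;> rw [h] <;> field_simp

lemma GegenbauerC_neg (n : ℕ) (β x : ℂ) :
    GegenbauerC n β (-x) = (-1) ^ n * GegenbauerC n β x := by
  rcases Nat.even_or_odd' n with ⟨p, rfl | rfl⟩
  · simp [GegenbauerC_even, pow_mul]
  · simp [GegenbauerC_odd, pow_succ, pow_mul]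

lemma ne_neg_nat_of_gt {β : ℝ} (hβ : -1 / 2 < β) (hβ0 : β ≠ 0) (m : ℕ) : (β : ℂ) ≠ -m := by
  intro h
  have h' : β = -(m : ℝ) := by exact_mod_cast h
  rcases Nat.eq_zero_or_pos m with rfl | hm
  · simp at h'; exact hβ0 h'
  · have : (1 : ℝ) ≤ m := by exact_mod_cast hm
    linarith

/-- The squared norm of `C_n^β (cos φ)` for the weight `sin φ ^ (2 * β)` on `(0, π)`. -/
def gegenNorm (n : ℕ) (β : ℂ) : ℂ :=
  Real.pi * 2 ^ (1 - 2 * β) * Complex.Gamma (2 * β + n) /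
    (n.factorial * (β + n) * Complex.Gamma β ^ 2)

lemma ofReal_sqrt_pi_mul_self : ((√Real.pi : ℝ) : ℂ) * ((√Real.pi : ℝ) : ℂ) = Real.pi := by
  rw [← Complex.ofReal_mul, Real.mul_self_sqrt Real.pi_pos.le]

/-- Legendre duplication at `β + p`. -/
lemma gegenNorm_even {β : ℝ} (hβ : -1 / 2 < β) (hβ0 : β ≠ 0) (p : ℕ) :
    ((-1) ^ p * poch β p / p.factorial) * ((-1) ^ p * poch β p / p.factorial) *
      hypNorm p (1 / 2) (β + 1 / 2) = gegenNorm (2 * p) β := by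
  have hb := ne_neg_nat_of_gt hβ hβ0
  have hG := Complex.Gamma_ne_zero hb
  have hbp : (β : ℂ) + (2 * p : ℕ) ≠ 0 := fun h => hb (2 * p) (by linear_combination h)
  have hG2 : Complex.Gamma ((β : ℂ) + (2 * p : ℕ)) ≠ 0 := by
    rw [Gamma_add_nat hb]; exact mul_ne_zero (poch_ne_zero hb _) hG
  have hdup := Complex.Gamma_mul_Gamma_add_half ((β : ℂ) + p)
  have hpow : (2 : ℂ) ^ (1 - 2 * ((β : ℂ) + p)) * 4 ^ p = 2 ^ (1 - 2 * (β : ℂ)) := by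
    rw [show (4 : ℂ) = 2 ^ 2 by norm_num, ← pow_mul, ← Complex.cpow_natCast,
      ← Complex.cpow_add _ _ two_ne_zero]
    congr 1
    push_cast
    ring
  have e1 : Complex.Gamma ((β : ℂ) + p) = poch β p * Complex.Gamma β := Gamma_add_nat hb p
  have e2 : Complex.Gamma ((β : ℂ) + (2 * p : ℕ)) = poch β p * poch (β + p) p * Complex.Gamma β := by
    rw [Gamma_add_nat hb, two_mul, poch_add]
  have e3 : Complex.Gamma (1 / 2 + ((β : ℂ) + 1 / 2) + 2 * p)
      = ((β : ℂ) + (2 * p : ℕ)) * Complex.Gamma ((β : ℂ) + (2 * p : ℕ)) := by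
    rw [← Complex.Gamma_add_one _ hbp]
    congr 1
    push_cast
    ring
  have h1 : (p.factorial : ℂ) ≠ 0 := by exact_mod_cast Nat.factorial_ne_zero p
  have h4 := poch_half_ne_zero p
  have hpi := ofReal_sqrt_pi_mul_self
  have hsq : Complex.Gamma (1 / 2) = ((√Real.pi : ℝ) : ℂ) := by
    rw [Complex.Gamma_one_half_eq, Real.sqrt_eq_rpow, Complex.ofReal_cpow Real.pi_pos.le]
    norm_num
  rw [gegenNorm, hypNorm, factorial_two_mul_eq, e3, e2, hsq,
    show (p : ℂ) + (1 / 2 + (β + 1 / 2)) - 1 = β + p by ring,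
    show 2 * (β : ℂ) + (2 * p : ℕ) = 2 * (β + p) by push_cast; ring, ← hpow,
    show (β : ℂ) + 1 / 2 + p = β + p + 1 / 2 by ring, ← hpi]
  rw [e1] at hdup
  rw [e2] at hG2
  have h6 := right_ne_zero_of_mul (left_ne_zero_of_mul hG2)
  have h7 := left_ne_zero_of_mul (left_ne_zero_of_mul hG2)
  generalize Complex.Gamma ((β : ℂ) + p + 1 / 2) = g at *
  generalize Complex.Gamma (2 * ((β : ℂ) + p)) = g2 at *
  generalize (2 : ℂ) ^ (1 - 2 * ((β : ℂ) + p)) = g3 at *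
  generalize (β : ℂ) + (2 * p : ℕ) = b2 at *
  generalize poch ((β : ℂ) + p) p = p2 at *
  rcases neg_one_pow_eq_or ℂ p with h | h <;> rw [h] <;> field_simp <;>
    linear_combination hdup

/-- Legendre duplication at `β + p + 1 / 2`. -/
lemma gegenNorm_odd {β : ℝ} (hβ : -1 / 2 < β) (hβ0 : β ≠ 0) (p : ℕ) :
    ((-1) ^ p * poch β (p + 1) / p.factorial) * ((-1) ^ p * poch β (p + 1) / p.factorial) * 4 *
      hypNorm p (3 / 2) (β + 1 / 2) = gegenNorm (2 * p + 1) β := by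
  have hb := ne_neg_nat_of_gt hβ hβ0
  have hG := Complex.Gamma_ne_zero hb
  have hbp : (β : ℂ) + (2 * p + 1 : ℕ) ≠ 0 := fun h => hb (2 * p + 1) (by linear_combination h)
  have hG2 : Complex.Gamma ((β : ℂ) + (2 * p + 1 : ℕ)) ≠ 0 := by
    rw [Gamma_add_nat hb]; exact mul_ne_zero (poch_ne_zero hb _) hG
  have hdup := Complex.Gamma_mul_Gamma_add_half ((β : ℂ) + p + 1 / 2)
  have hpow : (2 : ℂ) ^ (1 - 2 * ((β : ℂ) + p + 1 / 2)) * (2 * 4 ^ p) = 2 ^ (1 - 2 * (β : ℂ)) := by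
    rw [show (2 : ℂ) * 4 ^ p = 2 ^ (2 * p + 1) by rw [pow_succ, pow_mul]; norm_num; ring,
      ← Complex.cpow_natCast, ← Complex.cpow_add _ _ two_ne_zero]
    congr 1
    push_cast
    ring
  have e1 : Complex.Gamma ((β : ℂ) + p + 1 / 2 + 1 / 2) = poch β (p + 1) * Complex.Gamma β := by
    rw [← Gamma_add_nat hb]
    congr 1
    push_cast
    ring
  have e2 : Complex.Gamma ((β : ℂ) + (2 * p + 1 : ℕ))
      = poch β (p + 1) * poch (β + p + 1) p * Complex.Gamma β := by
    rw [Gamma_add_nat hb, show 2 * p + 1 = p + 1 + p by ring, poch_add]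
    push_cast
    rw [add_assoc]
  have e3 : Complex.Gamma (3 / 2 + ((β : ℂ) + 1 / 2) + 2 * p)
      = ((β : ℂ) + (2 * p + 1 : ℕ)) * Complex.Gamma ((β : ℂ) + (2 * p + 1 : ℕ)) := by
    rw [← Complex.Gamma_add_one _ hbp]
    congr 1
    push_cast
    ring
  have h1 : (p.factorial : ℂ) ≠ 0 := by exact_mod_cast Nat.factorial_ne_zero p
  have h4 := poch_three_half_ne_zero p
  have hpi := ofReal_sqrt_pi_mul_self
  have hsq : Complex.Gamma (3 / 2) = 1 / 2 * ((√Real.pi : ℝ) : ℂ) := by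
    rw [show (3 / 2 : ℂ) = 1 / 2 + 1 by norm_num, Complex.Gamma_add_one _ (by norm_num),
      Complex.Gamma_one_half_eq, Real.sqrt_eq_rpow, Complex.ofReal_cpow Real.pi_pos.le]
    norm_num
  rw [gegenNorm, hypNorm, factorial_two_mul_add_one_eq, e3, e2, hsq,
    show (p : ℂ) + (3 / 2 + (β + 1 / 2)) - 1 = β + p + 1 by ring,
    show 2 * (β : ℂ) + (2 * p + 1 : ℕ) = 2 * (β + p + 1 / 2) by push_cast; ring, ← hpow,
    show (β : ℂ) + 1 / 2 + p = β + p + 1 / 2 by ring, ← hpi]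
  rw [e1] at hdup
  rw [e2] at hG2
  have h6 := right_ne_zero_of_mul (left_ne_zero_of_mul hG2)
  have h7 := left_ne_zero_of_mul (left_ne_zero_of_mul hG2)
  generalize Complex.Gamma ((β : ℂ) + p + 1 / 2) = g at *
  generalize Complex.Gamma (2 * ((β : ℂ) + p + 1 / 2)) = g2 at *
  generalize (2 : ℂ) ^ (1 - 2 * ((β : ℂ) + p + 1 / 2)) = g3 at *
  generalize (β : ℂ) + (2 * p + 1 : ℕ) = b2 at *
  generalize poch ((β : ℂ) + p + 1) p = p2 at *
  rcases neg_one_pow_eq_or ℂ p with h | h <;> rw [h] <;> field_simp <;>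
    linear_combination 4 * hdup

lemma integral_GegenbauerC {β : ℝ} (hβ : -1 / 2 < β) (hβ0 : β ≠ 0) (n m : ℕ) :
    ∫ φ in Set.Ioo (0 : ℝ) Real.pi, GegenbauerC n β ((Real.cos φ : ℝ) : ℂ) *
        GegenbauerC m β ((Real.cos φ : ℝ) : ℂ) * ((Real.sin φ ^ (2 * β) : ℝ) : ℂ)
      = if n = m then gegenNorm n β else 0 := by
  by_cases hpar : Odd (n + m)
  · rw [if_neg (by rintro rfl; exact (Nat.not_odd_iff_even.2 ⟨n, rfl⟩) hpar)]
    refine integral_odd_eq_zero fun φ => ?_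
    rw [Real.cos_pi_sub, Real.sin_pi_sub, Complex.ofReal_neg, GegenbauerC_neg, GegenbauerC_neg]
    have : (-1 : ℂ) ^ n * (-1) ^ m = -1 := by rw [← pow_add, hpar.neg_one_pow]
    linear_combination (GegenbauerC n β ((Real.cos φ : ℝ) : ℂ) *
        GegenbauerC m β ((Real.cos φ : ℝ) : ℂ) * ((Real.sin φ ^ (2 * β) : ℝ) : ℂ)) * this
  have hB : 0 < β + 1 / 2 := by linarith
  rcases Nat.even_or_odd' n with ⟨p, rfl | rfl⟩ <;> rcases Nat.even_or_odd' m with ⟨q, rfl | rfl⟩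
  · have h1 := continuous_hypPoly p (1 / 2) (β + 1)
    have h2 := continuous_hypPoly q (1 / 2) (β + 1)
    have h := integral_hypPoly_mul (A := 1 / 2) (by norm_num) hB p q
    have hc : (((1 / 2 : ℝ) : ℂ) + ((β + 1 / 2 : ℝ) : ℂ)) = β + 1 := by push_cast; ring
    rw [hc] at h
    push_cast at h
    have hI := integral_comp_cos_sq hβ
      (F := fun t : ℝ => hypPoly p (1 / 2) (β + 1) t * hypPoly q (1 / 2) (β + 1) t) (h1.mul h2)
    rw [h] at hI
    have e : ∀ φ : ℝ, GegenbauerC (2 * p) β ((Real.cos φ : ℝ) : ℂ) *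
        GegenbauerC (2 * q) β ((Real.cos φ : ℝ) : ℂ) * ((Real.sin φ ^ (2 * β) : ℝ) : ℂ)
        = ((-1) ^ p * poch β p / p.factorial) * ((-1) ^ q * poch β q / q.factorial) *
          (hypPoly p (1 / 2) (β + 1) ((Real.cos φ ^ 2 : ℝ) : ℂ) *
            hypPoly q (1 / 2) (β + 1) ((Real.cos φ ^ 2 : ℝ) : ℂ) *
            ((Real.sin φ ^ (2 * β) : ℝ) : ℂ)) := fun φ => by
      rw [GegenbauerC_even, GegenbauerC_even, Complex.ofReal_pow]
      ring
    simp_rw [e]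
    rw [integral_const_mul, hI]
    by_cases hpq : p = q
    · subst hpq
      rw [if_pos rfl, if_pos rfl, gegenNorm_even hβ hβ0]
    · rw [if_neg hpq, if_neg (by omega), mul_zero]
  · exact absurd ⟨p + q, by ring⟩ hpar
  · exact absurd ⟨p + q, by ring⟩ hpar
  · have h1 := continuous_hypPoly p (3 / 2) (β + 2)
    have h2 := continuous_hypPoly q (3 / 2) (β + 2)
    have h := integral_hypPoly_mul (A := 3 / 2) (by norm_num) hB p q
    have hc : (((3 / 2 : ℝ) : ℂ) + ((β + 1 / 2 : ℝ) : ℂ)) = β + 2 := by push_cast; ring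
    rw [hc] at h
    push_cast at h
    have hI := integral_comp_cos_sq hβ
      (F := fun t : ℝ => hypPoly p (3 / 2) (β + 2) t * hypPoly q (3 / 2) (β + 2) t * t)
      ((h1.mul h2).mul Complex.continuous_ofReal)
    -- The factor `t = cos φ ^ 2` from the two odd polynomials raises `A` from `1 / 2` to `3 / 2`.
    have hwt : ∀ t ∈ Set.Ioo (0 : ℝ) 1,
        hypPoly p (3 / 2) (β + 2) t * hypPoly q (3 / 2) (β + 2) t * t *
          betaWt (1 / 2) (β + 1 / 2) t
        = hypPoly p (3 / 2) (β + 2) t * hypPoly q (3 / 2) (β + 2) t *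
          betaWt (3 / 2) (β + 1 / 2) t := fun t ht => by
      have := betaWt_shift ht (1 / 2) (β + 1 / 2) 1 0
      rw [show (1 / 2 : ℝ) + (1 : ℕ) = 3 / 2 by norm_num, Nat.cast_zero, add_zero] at this
      rw [← this]
      ring
    rw [setIntegral_congr_fun measurableSet_Ioo hwt, h] at hI
    have e : ∀ φ : ℝ, GegenbauerC (2 * p + 1) β ((Real.cos φ : ℝ) : ℂ) *
        GegenbauerC (2 * q + 1) β ((Real.cos φ : ℝ) : ℂ) * ((Real.sin φ ^ (2 * β) : ℝ) : ℂ)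
        = ((-1) ^ p * poch β (p + 1) / p.factorial) * ((-1) ^ q * poch β (q + 1) / q.factorial) * 4 *
          (hypPoly p (3 / 2) (β + 2) ((Real.cos φ ^ 2 : ℝ) : ℂ) *
            hypPoly q (3 / 2) (β + 2) ((Real.cos φ ^ 2 : ℝ) : ℂ) * ((Real.cos φ ^ 2 : ℝ) : ℂ) *
            ((Real.sin φ ^ (2 * β) : ℝ) : ℂ)) := fun φ => by
      rw [GegenbauerC_odd, GegenbauerC_odd, Complex.ofReal_pow]
      ring
    simp_rw [e]
    rw [integral_const_mul, hI]
    by_cases hpq : p = q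
    · subst hpq
      rw [if_pos rfl, if_pos rfl, gegenNorm_odd hβ hβ0]
    · rw [if_neg hpq, if_neg (by omega), mul_zero]

/-! ### The radial factor and the constant -/

lemma JacobiPoly_eq (l : ℕ) (α β x : ℂ) :
    JacobiPoly l α β x = poch (α + 1) l / l.factorial *
      hypPoly l (α + 1) (α + 1 + (β + 1)) ((1 - x) / 2) := by
  rw [JacobiPoly, hypPoly, show (l : ℂ) + (α + 1 + (β + 1)) - 1 = l + α + β + 1 by ring]

/-- The squared norm of the radial factor `w ^ n * P_l^{(A - 1, B - 1)} (2 * w ^ 2 - 1)`, where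
`A = α - β` and `B = β + n + 1`, for the weight `(1 - w ^ 2) ^ (α - β - 1) * w ^ (2 * β + 1)`. -/
def jacobiNorm (l : ℕ) (A B : ℂ) : ℂ :=
  (poch A l / l.factorial) * (poch A l / l.factorial) * hypNorm l A B / 2

lemma integral_radial {α β : ℝ} (hαβ : β < α) (hβ : -1 / 2 < β) (n l l' : ℕ) :
    ∫ w in Set.Ioo (0 : ℝ) 1,
        ((w : ℂ) ^ n * JacobiPoly l ((α : ℂ) - β - 1) (β + n) (2 * (w : ℂ) ^ 2 - 1)) *
        ((w : ℂ) ^ n * JacobiPoly l' ((α : ℂ) - β - 1) (β + n) (2 * (w : ℂ) ^ 2 - 1)) *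
        (((1 - w ^ 2) ^ (α - β - 1) * w ^ (2 * β + 1) : ℝ) : ℂ)
      = if l = l' then jacobiNorm l (α - β) (β + n + 1) else 0 := by
  have hB : 0 < β + n + 1 := by
    have := Nat.cast_nonneg (α := ℝ) n
    linarith
  have h := integral_hypPoly_mul (sub_pos.2 hαβ) hB l l'
  rw [← integral_sub_sq] at h
  push_cast at h
  have e : ∀ w ∈ Set.Ioo (0 : ℝ) 1,
        ((w : ℂ) ^ n * JacobiPoly l ((α : ℂ) - β - 1) (β + n) (2 * (w : ℂ) ^ 2 - 1)) *
        ((w : ℂ) ^ n * JacobiPoly l' ((α : ℂ) - β - 1) (β + n) (2 * (w : ℂ) ^ 2 - 1)) *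
        (((1 - w ^ 2) ^ (α - β - 1) * w ^ (2 * β + 1) : ℝ) : ℂ)
      = (poch (α - β) l / l.factorial) * (poch (α - β) l' / l'.factorial) / 2 *
        (2 * (w : ℂ) * (hypPoly l (α - β) (α - β + (β + n + 1)) (1 - (w : ℂ) ^ 2) *
          hypPoly l' (α - β) (α - β + (β + n + 1)) (1 - (w : ℂ) ^ 2) *
          betaWt (α - β) (β + n + 1) (1 - w ^ 2))) := fun w hw => by
    have hwt : w * ((1 - (1 - w ^ 2)) ^ (β + n + 1 - 1)) = w ^ n * w ^ n * w ^ (2 * β + 1) := by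
      rw [sub_sub_cancel, ← Real.rpow_natCast w 2, ← Real.rpow_mul hw.1.le, ← Real.rpow_natCast w n,
        ← Real.rpow_add hw.1, ← Real.rpow_add hw.1]
      nth_rewrite 1 [← Real.rpow_one w]
      rw [← Real.rpow_add hw.1]
      congr 1
      push_cast
      ring
    have hwt' : (w : ℂ) * (((1 - (1 - w ^ 2)) ^ (β + n + 1 - 1) : ℝ) : ℂ)
        = (w : ℂ) ^ n * (w : ℂ) ^ n * ((w ^ (2 * β + 1) : ℝ) : ℂ) := by
      rw [← Complex.ofReal_mul, hwt]
      simp only [Complex.ofReal_mul, Complex.ofReal_pow]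
    rw [JacobiPoly_eq, JacobiPoly_eq, betaWt, Complex.ofReal_mul, Complex.ofReal_mul,
      show (1 - (2 * (w : ℂ) ^ 2 - 1)) / 2 = 1 - (w : ℂ) ^ 2 by ring,
      show (α : ℂ) - β - 1 + 1 = α - β by ring]
    generalize hypPoly l ((α : ℂ) - β) (α - β + (β + n + 1)) (1 - (w : ℂ) ^ 2) = R1
    generalize hypPoly l' ((α : ℂ) - β) (α - β + (β + n + 1)) (1 - (w : ℂ) ^ 2) = R2
    linear_combination (-(poch (α - β) l / l.factorial) * (poch (α - β) l' / l'.factorial) *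
      R1 * R2 * (((1 - w ^ 2) ^ (α - β - 1) : ℝ) : ℂ)) * hwt'
  rw [setIntegral_congr_fun measurableSet_Ioo e, integral_const_mul, h]
  split_ifs with hl
  · subst hl
    rw [jacobiNorm]
    ring
  · simp

lemma jacobiNorm_mul_gegenNorm {α β : ℝ} (hαβ : β < α) (hβ : -1 / 2 < β) (hα0 : α ≠ 0)
    (k l : ℕ) (hlk : l ≤ k) :
    jacobiNorm l (α - β) (β + ((k - l : ℕ) : ℂ) + 1) * gegenNorm (k - l) β
      = (Real.pi : ℂ) * Complex.Gamma ((β : ℂ) + 1 + (k : ℂ)) *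
          Complex.Gamma (2 * (β : ℂ) + (k : ℂ) - (l : ℂ)) *
          Complex.Gamma ((α : ℂ) - (β : ℂ) + (l : ℂ)) /
          ((2 : ℂ) ^ (2 * (β : ℂ)) * Complex.Gamma (β : ℂ) ^ 2 *
            ((α : ℂ) + (k : ℂ) + (l : ℂ)) * ((β : ℂ) + (k : ℂ) - (l : ℂ)) *
            Complex.Gamma ((α : ℂ) + (k : ℂ)) * (Nat.factorial (k - l) : ℂ) *
            (Nat.factorial l : ℂ)) := by
  obtain ⟨n, rfl⟩ := Nat.exists_eq_add_of_le hlk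
  rw [Nat.add_sub_cancel_left]
  have ha := ne_neg_nat_of_gt (hβ.trans hαβ) hα0
  have hk : ∀ m : ℕ, (α : ℂ) + (l + n : ℕ) ≠ -m := fun m h =>
    ha (l + n + m) (by push_cast at h ⊢; linear_combination h)
  have hkl : (α : ℂ) + (l + n : ℕ) + l ≠ 0 := fun h => hk l (by linear_combination h)
  have hA : ∀ m : ℕ, (α : ℂ) - β ≠ -m := fun m => by
    have := ofReal_ne_neg_nat (sub_pos.2 hαβ) m
    push_cast at this
    exact this
  have e1 : Complex.Gamma ((α : ℂ) - β + (β + n + 1) + 2 * l)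
      = ((α : ℂ) + (l + n : ℕ) + l) *
        (poch ((α : ℂ) + (l + n : ℕ)) l * Complex.Gamma ((α : ℂ) + (l + n : ℕ))) := by
    rw [← Gamma_add_nat hk, ← Complex.Gamma_add_one _ hkl]
    congr 1
    push_cast
    ring
  have e2 : Complex.Gamma ((α : ℂ) - β + l) = poch (α - β) l * Complex.Gamma (α - β) :=
    Gamma_add_nat hA l
  have e3 : (2 : ℂ) ^ (1 - 2 * (β : ℂ)) = 2 / 2 ^ (2 * (β : ℂ)) := by
    rw [Complex.cpow_sub _ _ two_ne_zero, Complex.cpow_one]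
  have h2 : (2 : ℂ) ^ (2 * (β : ℂ)) ≠ 0 := by simp [Complex.cpow_eq_zero_iff]
  rw [jacobiNorm, hypNorm, gegenNorm, e1, e2, e3,
    show (l : ℂ) + ((α : ℂ) - β + (β + n + 1)) - 1 = α + (l + n : ℕ) by push_cast; ring,
    show (β : ℂ) + n + 1 + l = β + 1 + (l + n : ℕ) by push_cast; ring,
    show 2 * (β : ℂ) + (l + n : ℕ) - l = 2 * β + n by push_cast; ring,
    show (β : ℂ) + (l + n : ℕ) - l = β + n by push_cast; ring]
  have hP := poch_ne_zero hk l
  have hQ := poch_ne_zero hA l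
  have h1 : (l.factorial : ℂ) ≠ 0 := by exact_mod_cast Nat.factorial_ne_zero l
  generalize Complex.Gamma ((β : ℂ) + 1 + (l + n : ℕ)) = g1
  generalize Complex.Gamma (2 * (β : ℂ) + n) = g2
  generalize poch ((α : ℂ) + (l + n : ℕ)) l = P at *
  generalize Complex.Gamma ((α : ℂ) + (l + n : ℕ)) = g3
  generalize (α : ℂ) + (l + n : ℕ) + l = s at *
  field_simp

/-- Orthogonality relation for the 2-variable parabolic biangle polynomials. -/
theorem biangle_orthogonality (k l k' l' : ℕ) (hlk : l ≤ k) (hlk' : l' ≤ k')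
    (α β : ℝ) (hαβ : β < α) (hβ : -1 / 2 < β) (hα0 : α ≠ 0) (hβ0 : β ≠ 0) :
    (∫ w in Set.Ioo (0 : ℝ) 1, ∫ φ in Set.Ioo (0 : ℝ) Real.pi,
        biangle α β k l w φ * biangle α β k' l' w φ *
          (((1 - w ^ 2) ^ (α - β - 1) * w ^ (2 * β + 1) * Real.sin φ ^ (2 * β) : ℝ) : ℂ)) =
      (Real.pi : ℂ) * Complex.Gamma ((β : ℂ) + 1 + (k : ℂ)) *
          Complex.Gamma (2 * (β : ℂ) + (k : ℂ) - (l : ℂ)) *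
          Complex.Gamma ((α : ℂ) - (β : ℂ) + (l : ℂ)) /
          ((2 : ℂ) ^ (2 * (β : ℂ)) * Complex.Gamma (β : ℂ) ^ 2 *
            ((α : ℂ) + (k : ℂ) + (l : ℂ)) * ((β : ℂ) + (k : ℂ) - (l : ℂ)) *
            Complex.Gamma ((α : ℂ) + (k : ℂ)) * (Nat.factorial (k - l) : ℂ) *
            (Nat.factorial l : ℂ)) *
        (if k = k' ∧ l = l' then 1 else 0) := by
  -- The integrand separates into a radial and an angular factor.
  have e : ∀ w φ : ℝ, biangle α β k l w φ * biangle α β k' l' w φ *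
        (((1 - w ^ 2) ^ (α - β - 1) * w ^ (2 * β + 1) * Real.sin φ ^ (2 * β) : ℝ) : ℂ)
      = (((w : ℂ) ^ (k - l) * JacobiPoly l ((α : ℂ) - β - 1) (β + ((k - l : ℕ) : ℂ))
            (2 * (w : ℂ) ^ 2 - 1)) *
          ((w : ℂ) ^ (k' - l') * JacobiPoly l' ((α : ℂ) - β - 1) (β + ((k' - l' : ℕ) : ℂ))
            (2 * (w : ℂ) ^ 2 - 1)) *
          (((1 - w ^ 2) ^ (α - β - 1) * w ^ (2 * β + 1) : ℝ) : ℂ)) *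
        (GegenbauerC (k - l) β ((Real.cos φ : ℝ) : ℂ) *
          GegenbauerC (k' - l') β ((Real.cos φ : ℝ) : ℂ) *
          ((Real.sin φ ^ (2 * β) : ℝ) : ℂ)) := fun w φ => by
    rw [biangle, biangle, Complex.ofReal_mul _ (Real.sin φ ^ (2 * β))]
    ring
  simp_rw [e, integral_const_mul, integral_GegenbauerC hβ hβ0]
  rw [integral_mul_const]
  by_cases hn : k - l = k' - l'
  · rw [if_pos hn, ← hn, integral_radial hαβ hβ]
    by_cases hl : l = l'
    · rw [if_pos hl, if_pos ⟨by omega, hl⟩, mul_one,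
        jacobiNorm_mul_gegenNorm hαβ hβ hα0 k l hlk]
    · rw [if_neg hl, if_neg (fun h => hl h.2), zero_mul, mul_zero]
  · rw [if_neg hn, if_neg (by rintro ⟨rfl, rfl⟩; exact hn rfl), mul_zero, mul_zero]

end
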